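/- Let D ⊆ ℝ^d be compact and convex, and ν a probability measure with full support on D, absolutely continuous with respect to Lebesgue measure. Let ρ ∈ F_ν have finite support and suppose there exists a Laguerre diagram of D such that, for each Laguerre cell L with ν(L) > 0, ρ|_L ⪯ ν|_L and the support of ρ|_L is affinely independent. Then ρ is a Lipschitz-exposed point of F_ν. -/

import Mathlib

open MeasureTheory Set Filter Topology
open scoped ENNReal NNReal

noncomputable section

/-- Euclidean space `ℝ^d`. -/
abbrev Euc (d : ℕ) : Type := EuclideanSpace ℝ (Fin d)

/-- `ρ ⪯ μ` in the convex order: `∫ ψ dρ ≤ ∫ ψ dμ` for every convex function `ψ` for which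
both integrals exist. -/
def ConvexOrderLE {d : ℕ} (ρ μ : Measure (Euc d)) : Prop :=
  ∀ ψ : Euc d → ℝ, ConvexOn ℝ Set.univ ψ → Integrable ψ μ → Integrable ψ ρ →
    ∫ x, ψ x ∂ρ ≤ ∫ x, ψ x ∂μ

/-- The set of fusions of `ν`: probability measures supported on `D` that are dominated by `ν`
in the convex order. -/
def fusions {d : ℕ} (D : Set (Euc d)) (ν : Measure (Euc d)) : Set (Measure (Euc d)) :=
  {ρ | IsProbabilityMeasure ρ ∧ ρ Dᶜ = 0 ∧ ConvexOrderLE ρ ν}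

/-- The (topological) support of a measure. -/
def msupport {d : ℕ} (ρ : Measure (Euc d)) : Set (Euc d) := {x | ∀ U ∈ nhds x, ρ U ≠ 0}

/-- Laguerre cell of site `x_i` with weight `g_i` inside the domain `D`. -/
def LaguerreCell {d n : ℕ} (D : Set (Euc d)) (X : Fin n → Euc d) (g : Fin n → ℝ)
    (i : Fin n) : Set (Euc d) :=
  {y ∈ D | ∀ j, ‖y - X i‖ ^ 2 - g i ≤ ‖y - X j‖ ^ 2 - g j}

/-- `ρ` is a Lipschitz-exposed point of `F_ν`: there exists a Lipschitz function `Φ` on `D`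
such that `ρ` is the unique maximizer of `λ ↦ ∫ Φ dλ` over `F_ν`. -/
def IsLipschitzExposed {d : ℕ} (D : Set (Euc d)) (ν ρ : Measure (Euc d)) : Prop :=
  ρ ∈ fusions D ν ∧ ∃ (K : ℝ≥0) (Φ : Euc d → ℝ), LipschitzOnWith K Φ D ∧
    ∀ lam ∈ fusions D ν, lam ≠ ρ → ∫ y, Φ y ∂lam < ∫ y, Φ y ∂ρ

/-!
Subtracting `‖y‖²` turns the Laguerre cells into the cells on which one of finitely many affine
functions `a i` attains their maximum `p`; only the cells of positive mass matter. Testing the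
convex order on `p` perturbed to `p ⊔ (a i + b / n)`, with `b` affine and nonnegative on `D`, shows
that a fusion `λ` of `ν` with `∫ p dλ ≥ ∫ p dν` has the same affine moments as `ν` on each cell.
By hypothesis `ρ` has the same affine moments as `ν` on each cell as well, whence
`∫ p dρ ≥ ∫ p dν`. Let `S` be the finite set of atoms of `ρ` and `Φ = p - dist(·, S)`. A maximizer
`λ` of `∫ Φ` lives on `S` and has `∫ p dλ ≥ ∫ p dν`; as a measure on an affinely independent set is
determined by its affine moments, `λ` and `ρ` agree on each cell.
-/

section AffineMap

lemma exists_affineMap_eq_one_of_affineIndependent {k V P : Type*} [Field k] [AddCommGroup V]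
    [Module k V] [AddTorsor V P] {T : Set P} (hT : AffineIndependent k ((↑) : T → P)) {s : P}
    (hs : s ∈ T) : ∃ f : P →ᵃ[k] k, f s = 1 ∧ ∀ t ∈ T, t ≠ s → f t = 0 := by
  obtain ⟨t, hTt, hti, hspan⟩ := exists_subset_affineIndependent_affineSpan_eq_top hT
  let B : AffineBasis t k P := ⟨(↑), hti, by simpa using hspan⟩
  refine ⟨B.coord ⟨s, hTt hs⟩, B.coord_apply_eq ⟨s, hTt hs⟩, fun x hx hxs => ?_⟩
  exact B.coord_apply_ne (i := ⟨s, hTt hs⟩) (j := ⟨x, hTt hx⟩) fun h =>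
    hxs (congrArg Subtype.val h).symm

lemma convexOn_affineMap {E : Type*} [AddCommGroup E] [Module ℝ E] (f : E →ᵃ[ℝ] ℝ) :
    ConvexOn ℝ univ f :=
  (convexOn_id convex_univ).comp_affineMap f

lemma measure_setOf_affineMap_eq_zero {E : Type*} [AddCommGroup E] [Module ℝ E]
    [MeasurableSpace E] {μ : Measure E} (hμ : ∀ H : AffineSubspace ℝ E, H ≠ ⊤ → μ H = 0)
    {f g : E →ᵃ[ℝ] ℝ} (hfg : f ≠ g) : μ {y | f y = g y} = 0 := by
  let H : AffineSubspace ℝ E := (affineSpan ℝ {(0 : ℝ)}).comap (f - g)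
  have mem_H (y : E) : y ∈ H ↔ f y = g y := by
    simp [H, sub_eq_zero]
  have hH : H ≠ ⊤ := fun h =>
    hfg <| AffineMap.ext fun y => (mem_H y).1 (h ▸ AffineSubspace.mem_top ..)
  exact (congrArg μ (Set.ext mem_H)).symm.trans (hμ H hH)

end AffineMap

section Measure

variable {X : Type*} [MeasurableSpace X] {μ : Measure X}

lemma integrable_of_continuous_of_ae_mem [TopologicalSpace X] [T2Space X] [OpensMeasurableSpace X]
    {E : Type*} [NormedAddCommGroup E] [IsFiniteMeasureOnCompacts μ] {K : Set X}
    (hK : IsCompact K) (hμ : ∀ᵐ x ∂μ, x ∈ K) {f : X → E} (hf : Continuous f) :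
    Integrable f μ := by
  rw [← Measure.restrict_eq_self_of_ae_mem hμ]
  exact hf.continuousOn.integrableOn_compact hK

lemma integrable_of_convexOn_of_ae_mem {E : Type*} [NormedAddCommGroup E] [NormedSpace ℝ E]
    [FiniteDimensional ℝ E] [MeasurableSpace E] [OpensMeasurableSpace E] {μ : Measure E}
    [IsFiniteMeasureOnCompacts μ] {K : Set E} (hK : IsCompact K) (hμ : ∀ᵐ x ∂μ, x ∈ K)
    {f : E → ℝ} (hf : ConvexOn ℝ univ f) : Integrable f μ :=
  integrable_of_continuous_of_ae_mem hK hμ hf.locallyLipschitz.continuous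

lemma integral_le_sum_setIntegral_of_iUnion_eq_univ {ι : Type*} [Fintype ι] {L : ι → Set X}
    (hL : ⋃ i, L i = univ) {f : X → ℝ} (hf : Integrable f μ) (hf0 : 0 ≤ᵐ[μ] f) :
    ∫ x, f x ∂μ ≤ ∑ i, ∫ x in L i, f x ∂μ := by
  have hle : μ ≤ ∑ i, μ.restrict (L i) := by
    rw [← Measure.sum_fintype]
    simpa only [hL, Measure.restrict_univ] using Measure.restrict_iUnion_le (μ := μ) (s := L)
  rw [← integral_finsetSum_measure fun i _ => hf.restrict]
  refine integral_mono_measure hle ?_ (integrable_finsetSum_measure.2 fun i _ => hf.restrict)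
  rw [← Measure.sum_fintype]
  exact Measure.ae_sum_iff.2 fun i => ae_restrict_of_ae hf0

lemma integral_eq_sum_setIntegral_of_iUnion_eq_univ {ι : Type*} [Fintype ι] {L : ι → Set X}
    (hL : ⋃ i, L i = univ) (hLm : ∀ i, MeasurableSet (L i))
    (hdisj : Pairwise (Function.onFun (AEDisjoint μ) L)) {f : X → ℝ} (hf : Integrable f μ) :
    ∫ x, f x ∂μ = ∑ i, ∫ x in L i, f x ∂μ := by
  rw [← setIntegral_univ, ← hL, integral_iUnion_ae (fun i => (hLm i).nullMeasurableSet) hdisj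
    hf.integrableOn, tsum_fintype]

lemma tendsto_max_mul_add_sub_mul {p a b : ℝ} (hap : a ≤ p) (hb : 0 ≤ b) :
    Tendsto (fun n : ℕ => max (n * p) (n * a + b) - n * p) atTop (𝓝 (if a = p then b else 0)) := by
  split_ifs with h
  · simp [h, hb]
  · have hlt : 0 < p - a := sub_pos.2 (lt_of_le_of_ne hap h)
    refine tendsto_const_nhds.congr' ?_
    filter_upwards [tendsto_natCast_atTop_atTop.eventually_ge_atTop (b / (p - a))] with n hn
    have : b ≤ n * (p - a) := (div_le_iff₀ hlt).1 hn
    rw [max_eq_left (by linarith), sub_self]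

lemma tendsto_integral_max_mul_add_sub_mul {p a b : X → ℝ} (hp : Measurable p)
    (ha : Measurable a) (hb : Integrable b μ) (hap : ∀ᵐ x ∂μ, a x ≤ p x)
    (hb0 : ∀ᵐ x ∂μ, 0 ≤ b x) :
    Tendsto (fun n : ℕ => ∫ x, max (n * p x) (n * a x + b x) - n * p x ∂μ) atTop
      (𝓝 (∫ x in {x | a x = p x}, b x ∂μ)) := by
  rw [← integral_indicator (measurableSet_eq_fun ha hp)]
  refine tendsto_integral_of_dominated_convergence b (fun n => ?_) hb (fun n => ?_) ?_
  · have hnp := (hp.const_mul (n : ℝ)).aestronglyMeasurable (μ := μ)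
    exact (hnp.sup ((ha.const_mul (n : ℝ)).aestronglyMeasurable.add hb.1)).sub hnp
  · filter_upwards [hap, hb0] with x hapx hbx
    have : n * a x ≤ n * p x := by gcongr
    rw [Real.norm_of_nonneg (sub_nonneg.2 (le_max_left _ _)), sub_le_iff_le_add]
    exact max_le (by linarith) (by linarith)
  · filter_upwards [hap, hb0] with x hapx hbx
    simpa only [indicator_apply] using! tendsto_max_mul_add_sub_mul hapx hbx

end Measure

section Support

variable {X : Type*} [TopologicalSpace X] [MeasurableSpace X] {μ : Measure X}

lemma msupport_eq_support {d : ℕ} (μ : Measure (Euc d)) : msupport μ = μ.support := by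
  ext x
  simp only [msupport, mem_ofPred_eq, Measure.mem_support_iff_forall, pos_iff_ne_zero]

lemma mem_support_iff_measure_singleton_ne_zero [HereditarilyLindelofSpace X] [T1Space X]
    (hfin : μ.support.Finite) {x : X} : x ∈ μ.support ↔ μ {x} ≠ 0 := by
  refine ⟨fun hx h0 => ?_, fun hx => ?_⟩
  · have hmem : μ.support \ {x} ∈ ae μ := by
      filter_upwards [Measure.support_mem_ae, compl_mem_ae_iff.2 h0] with y hy hyx using ⟨hy, hyx⟩
    exact (Measure.support_subset_of_isClosed (hfin.subset sdiff_subset).isClosed hmem hx).2 rfl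
  · exact (Measure.mem_support_iff_forall x).2 fun U hU =>
      (pos_iff_ne_zero.2 hx).trans_le (measure_mono (singleton_subset_iff.2 (mem_of_mem_nhds hU)))

lemma mem_support_restrict_iff_of_finite [HereditarilyLindelofSpace X] [T1Space X]
    [MeasurableSingletonClass X] {s : Set X} (hfin : (μ.restrict s).support.Finite) {x : X} :
    x ∈ (μ.restrict s).support ↔ x ∈ s ∧ μ {x} ≠ 0 := by
  rw [mem_support_iff_measure_singleton_ne_zero hfin,
    Measure.restrict_apply (measurableSet_singleton x)]
  by_cases hx : x ∈ s <;> simp [hx]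

lemma support_subset_iUnion_of_measure_pos [OpensMeasurableSpace X] {ι : Type*} [Finite ι]
    {L : ι → Set X} (hL : ⋃ i, L i = univ) (hLc : ∀ i, IsClosed (L i)) :
    μ.support ⊆ ⋃ i : {i // 0 < μ (L i)}, L i := by
  refine Measure.support_subset_of_isClosed (isClosed_iUnion_of_finite fun i => hLc i) ?_
  have hnull : ∀ᵐ x ∂μ, ∀ i : {i // ¬ 0 < μ (L i)}, x ∉ L i :=
    ae_all_iff.2 fun i => measure_eq_zero_iff_ae_notMem.1 (by simpa using i.2)
  filter_upwards [hnull] with x hx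
  obtain ⟨i, hi⟩ := mem_iUnion.1 (hL ▸ mem_univ x)
  exact mem_iUnion.2 ⟨⟨i, not_not.1 fun h => hx ⟨i, h⟩ hi⟩, hi⟩

end Support

section AffineMoments

/-- Two measures have the same affine moments if they integrate every affine function equally,
that is, if they have the same mass and the same first moments. It is only used for measures
that integrate affine functions; otherwise the integrals involved take the value `0`. -/
def SameAffineMoments {E : Type*} [AddCommGroup E] [Module ℝ E] [MeasurableSpace E]
    (μ ν : Measure E) : Prop :=
  ∀ f : E →ᵃ[ℝ] ℝ, ∫ y, f y ∂μ = ∫ y, f y ∂ν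

namespace SameAffineMoments

lemma symm {E : Type*} [AddCommGroup E] [Module ℝ E] [MeasurableSpace E] {μ ν : Measure E}
    (h : SameAffineMoments μ ν) : SameAffineMoments ν μ :=
  fun f => (h f).symm

lemma trans {E : Type*} [AddCommGroup E] [Module ℝ E] [MeasurableSpace E] {μ ν ξ : Measure E}
    (h : SameAffineMoments μ ν) (h' : SameAffineMoments ν ξ) : SameAffineMoments μ ξ :=
  fun f => (h f).trans (h' f)

lemma eq_of_affineIndependent {E : Type*} [AddCommGroup E] [Module ℝ E] [MeasurableSpace E]
    [MeasurableSingletonClass E] {μ ν : Measure E} [IsFiniteMeasure μ] [IsFiniteMeasure ν]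
    (h : SameAffineMoments μ ν) {T : Set E} (hT : AffineIndependent ℝ ((↑) : T → E))
    (hTc : T.Countable) (hμ : ∀ᵐ y ∂μ, y ∈ T) (hν : ∀ᵐ y ∂ν, y ∈ T) : μ = ν := by
  have integral_coord {ξ : Measure E} (hξ : ∀ᵐ y ∂ξ, y ∈ T) {s : E} {f : E →ᵃ[ℝ] ℝ}
      (hfs : f s = 1) (hf : ∀ t ∈ T, t ≠ s → f t = 0) : ∫ y, f y ∂ξ = ξ.real {s} := by
    rw [← integral_indicator_one (measurableSet_singleton s)]
    refine integral_congr_ae ?_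
    filter_upwards [hξ] with y hy
    by_cases hys : y = s
    · simp [hys, hfs]
    · simp [hys, hf y hy hys]
  have singleton_eq : ∀ s ∈ T, μ {s} = ν {s} := fun s hs => by
    obtain ⟨f, hfs, hf⟩ := exists_affineMap_eq_one_of_affineIndependent hT hs
    rw [← measureReal_eq_measureReal_iff, ← integral_coord hμ hfs hf, h f,
      integral_coord hν hfs hf]
  rw [← Measure.restrict_eq_self_of_ae_mem hμ, ← Measure.restrict_eq_self_of_ae_mem hν,
    ← biUnion_of_singleton T, Measure.restrict_biUnion_congr hTc]
  intro s hs
  rw [Measure.restrict_singleton, Measure.restrict_singleton, singleton_eq s hs]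

lemma of_nonneg_on_compact {E : Type*} [NormedAddCommGroup E] [NormedSpace ℝ E]
    [FiniteDimensional ℝ E] [MeasurableSpace E] [OpensMeasurableSpace E] {D : Set E}
    (hD : IsCompact D) {μ ν : Measure E} [IsFiniteMeasure μ] [IsFiniteMeasure ν]
    (hμ : ∀ᵐ y ∂μ, y ∈ D) (hν : ∀ᵐ y ∂ν, y ∈ D)
    (h : ∀ f : E →ᵃ[ℝ] ℝ, (∀ y ∈ D, 0 ≤ f y) → ∫ y, f y ∂μ = ∫ y, f y ∂ν) :
    SameAffineMoments μ ν := by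
  intro f
  have hfc : Continuous f := f.continuous_of_finiteDimensional
  obtain ⟨C, hC⟩ := hD.exists_bound_of_continuousOn hfc.continuousOn
  have hC0 : ∀ y ∈ D, 0 ≤ C := fun y hy => (norm_nonneg _).trans (hC y hy)
  have h_const := h (AffineMap.const ℝ E C) hC0
  have h_add := h (f + AffineMap.const ℝ E C) fun y hy => by
    simpa using neg_le_iff_add_nonneg.1 (neg_le_of_abs_le (hC y hy))
  have integral_shift {ξ : Measure E} [IsFiniteMeasure ξ] (hξ : ∀ᵐ y ∂ξ, y ∈ D) :
      ∫ y, (f + AffineMap.const ℝ E C) y ∂ξ = ∫ y, f y ∂ξ + ∫ y, AffineMap.const ℝ E C y ∂ξ :=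
    integral_add (integrable_of_continuous_of_ae_mem hD hξ hfc) (integrable_const C)
  rwa [integral_shift hμ, integral_shift hν, h_const, add_left_inj] at h_add

end SameAffineMoments

end AffineMoments

section MaxCell

variable {ι E : Type*}

/-- The cell on which the `i`-th member of a family of affine functions dominates all the others.
Laguerre cells are of this form inside the domain, see `LaguerreCell_eq_inter_maxCell`. -/
def maxCell [AddCommGroup E] [Module ℝ E] (a : ι → E →ᵃ[ℝ] ℝ) (i : ι) : Set E :=
  {y | ∀ j, a j y ≤ a i y}

/-- The pointwise maximum of a finite family of affine functions. -/
def maxAffine [AddCommGroup E] [Module ℝ E] [Fintype ι] [Nonempty ι] (a : ι → E →ᵃ[ℝ] ℝ) : E → ℝ :=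
  Finset.univ.sup' Finset.univ_nonempty fun i => ⇑(a i)

section Algebra

variable [AddCommGroup E] [Module ℝ E]

lemma le_maxAffine [Fintype ι] [Nonempty ι] (a : ι → E →ᵃ[ℝ] ℝ) (i : ι) (y : E) :
    a i y ≤ maxAffine a y :=
  Finset.le_sup' (fun i => ⇑(a i)) (Finset.mem_univ i) y

lemma convexOn_maxAffine [Fintype ι] [Nonempty ι] (a : ι → E →ᵃ[ℝ] ℝ) :
    ConvexOn ℝ univ (maxAffine a) :=
  Finset.sup'_induction _ _ (fun _ hf _ hg => hf.sup hg) fun i _ => convexOn_affineMap (a i)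

lemma mem_maxCell_iff_eq_maxAffine [Fintype ι] [Nonempty ι] {a : ι → E →ᵃ[ℝ] ℝ} {i : ι} {y : E} :
    y ∈ maxCell a i ↔ a i y = maxAffine a y := by
  refine ⟨fun h => le_antisymm (le_maxAffine a i y) ?_, fun h j => h ▸ le_maxAffine a j y⟩
  rw [maxAffine, Finset.sup'_apply]
  exact Finset.sup'_le _ _ fun j _ => h j

lemma iUnion_maxCell [Finite ι] [Nonempty ι] (a : ι → E →ᵃ[ℝ] ℝ) : ⋃ i, maxCell a i = univ :=
  eq_univ_of_forall fun y => mem_iUnion.2 (Finite.exists_max fun i => a i y)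

lemma maxCell_comp_ae_eq [MeasurableSpace E] {μ : Measure E} {κ : Type*} {a : ι → E →ᵃ[ℝ] ℝ}
    {e : κ → ι} (hμ : ∀ᵐ y ∂μ, y ∈ ⋃ k, maxCell a (e k)) (k : κ) :
    maxCell (a ∘ e) k =ᵐ[μ] maxCell a (e k) := by
  filter_upwards [hμ] with y hy
  obtain ⟨l, hl⟩ := mem_iUnion.1 hy
  exact propext ⟨fun h j => (hl j).trans (h l), fun h m => h (e m)⟩

lemma pairwise_aedisjoint_maxCell [MeasurableSpace E] {μ : Measure E}
    (hμ : ∀ H : AffineSubspace ℝ E, H ≠ ⊤ → μ H = 0) {a : ι → E →ᵃ[ℝ] ℝ}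
    (ha : Function.Injective a) : Pairwise (Function.onFun (AEDisjoint μ) (maxCell a)) :=
  fun i j hij => measure_mono_null (fun _ hy => le_antisymm (hy.2 i) (hy.1 j))
    (measure_setOf_affineMap_eq_zero hμ (ha.ne hij))

end Algebra

variable [NormedAddCommGroup E] [NormedSpace ℝ E] [FiniteDimensional ℝ E]

lemma isClosed_maxCell (a : ι → E →ᵃ[ℝ] ℝ) (i : ι) : IsClosed (maxCell a i) := by
  simp only [maxCell, ofPred_forall]
  exact isClosed_iInter fun j =>
    isClosed_le (a j).continuous_of_finiteDimensional (a i).continuous_of_finiteDimensional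

lemma integral_maxAffine_le_of_sameAffineMoments [Fintype ι] [Nonempty ι] [MeasurableSpace E]
    [BorelSpace E] {D : Set E} (hD : IsCompact D) {μ ν : Measure E} [IsProbabilityMeasure μ]
    [IsProbabilityMeasure ν] (hμ : ∀ᵐ y ∂μ, y ∈ D) (hν : ∀ᵐ y ∂ν, y ∈ D)
    {a : ι → E →ᵃ[ℝ] ℝ} (hdisj : Pairwise (Function.onFun (AEDisjoint ν) (maxCell a)))
    (h : ∀ i, SameAffineMoments (μ.restrict (maxCell a i)) (ν.restrict (maxCell a i))) :
    ∫ y, maxAffine a y ∂ν ≤ ∫ y, maxAffine a y ∂μ := by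
  have hpc : Continuous (maxAffine a) := (convexOn_maxAffine a).locallyLipschitz.continuous
  have hpμ := integrable_of_convexOn_of_ae_mem hD hμ (convexOn_maxAffine a)
  have hpν := integrable_of_convexOn_of_ae_mem hD hν (convexOn_maxAffine a)
  obtain ⟨C, hC⟩ := hD.bddAbove_image hpc.continuousOn
  have hC0 : ∀ᵐ y ∂μ, 0 ≤ C - maxAffine a y :=
    hμ.mono fun y hy => sub_nonneg.2 (hC (mem_image_of_mem _ hy))
  have setIntegral_eq (ξ : Measure E) (i : ι) : ∫ y in maxCell a i, (C - maxAffine a y) ∂ξ =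
      ∫ y in maxCell a i, (AffineMap.const ℝ E C - a i) y ∂ξ :=
    setIntegral_congr_fun (isClosed_maxCell a i).measurableSet fun y hy => by
      simp [mem_maxCell_iff_eq_maxAffine.1 hy]
  have hle : ∫ y, (C - maxAffine a y) ∂μ ≤ ∫ y, (C - maxAffine a y) ∂ν := calc
    _ ≤ ∑ i, ∫ y in maxCell a i, (C - maxAffine a y) ∂μ :=
      integral_le_sum_setIntegral_of_iUnion_eq_univ (iUnion_maxCell a)
        ((integrable_const C).sub hpμ) hC0
    _ = ∑ i, ∫ y in maxCell a i, (C - maxAffine a y) ∂ν := by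
      simp only [setIntegral_eq, h _ _]
    _ = _ := (integral_eq_sum_setIntegral_of_iUnion_eq_univ (iUnion_maxCell a)
      (fun i => (isClosed_maxCell a i).measurableSet) hdisj ((integrable_const C).sub hpν)).symm
  rw [integral_sub (integrable_const C) hpμ, integral_sub (integrable_const C) hpν] at hle
  simp only [integral_const, probReal_univ, one_smul] at hle
  linarith

end MaxCell

section ConvexOrder

variable {d : ℕ} {D : Set (Euc d)} {μ ν : Measure (Euc d)} [IsFiniteMeasure μ]
  [IsFiniteMeasure ν]

lemma ConvexOrderLE.sameAffineMoments (h : ConvexOrderLE μ ν) (hD : IsCompact D)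
    (hμ : ∀ᵐ y ∂μ, y ∈ D) (hν : ∀ᵐ y ∂ν, y ∈ D) : SameAffineMoments μ ν := by
  have integral_le (f : Euc d →ᵃ[ℝ] ℝ) : ∫ y, f y ∂μ ≤ ∫ y, f y ∂ν :=
    h f (convexOn_affineMap f) (integrable_of_convexOn_of_ae_mem hD hν (convexOn_affineMap f))
      (integrable_of_convexOn_of_ae_mem hD hμ (convexOn_affineMap f))
  refine fun f => le_antisymm (integral_le f) ?_
  simpa [integral_neg] using integral_le (-f)

/-- The inequality is the limit of the convex order tested on `(n p) ⊔ (n a + b)`, from which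
`n ∫ p` is subtracted on both sides. -/
lemma ConvexOrderLE.setIntegral_le_of_integral_le (h : ConvexOrderLE μ ν) (hD : IsCompact D)
    (hμ : ∀ᵐ y ∂μ, y ∈ D) (hν : ∀ᵐ y ∂ν, y ∈ D) {p a b : Euc d → ℝ} (hp : ConvexOn ℝ univ p)
    (ha : ConvexOn ℝ univ a) (hb : ConvexOn ℝ univ b) (hap : ∀ y ∈ D, a y ≤ p y)
    (hb0 : ∀ y ∈ D, 0 ≤ b y) (hint : ∫ y, p y ∂ν ≤ ∫ y, p y ∂μ) :
    ∫ y in {y | a y = p y}, b y ∂μ ≤ ∫ y in {y | a y = p y}, b y ∂ν := by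
  have tendsto_integral {ξ : Measure (Euc d)} [IsFiniteMeasure ξ] (hξ : ∀ᵐ y ∂ξ, y ∈ D) :=
    tendsto_integral_max_mul_add_sub_mul hp.locallyLipschitz.continuous.measurable
      ha.locallyLipschitz.continuous.measurable (integrable_of_convexOn_of_ae_mem hD hξ hb)
      (hξ.mono hap) (hξ.mono hb0)
  refine le_of_tendsto_of_tendsto' (tendsto_integral hμ) (tendsto_integral hν) fun n => ?_
  have hq : ConvexOn ℝ univ fun y => max (n * p y) (n * a y + b y) :=
    (hp.smul n.cast_nonneg).sup ((ha.smul n.cast_nonneg).add hb)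
  have hqμ := integrable_of_convexOn_of_ae_mem hD hμ hq
  have hqν := integrable_of_convexOn_of_ae_mem hD hν hq
  have hpμ := integrable_of_convexOn_of_ae_mem hD hμ hp
  have hpν := integrable_of_convexOn_of_ae_mem hD hν hp
  rw [integral_sub hqμ (hpμ.const_mul _), integral_sub hqν (hpν.const_mul _),
    integral_const_mul, integral_const_mul]
  exact sub_le_sub (h _ hq hqν hqμ) (mul_le_mul_of_nonneg_left hint n.cast_nonneg)

lemma ConvexOrderLE.sameAffineMoments_restrict_maxCell {ι : Type*} [Fintype ι] [Nonempty ι]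
    (h : ConvexOrderLE μ ν) (hD : IsCompact D) (hμ : ∀ᵐ y ∂μ, y ∈ D) (hν : ∀ᵐ y ∂ν, y ∈ D)
    {a : ι → Euc d →ᵃ[ℝ] ℝ} (hdisj : Pairwise (Function.onFun (AEDisjoint ν) (maxCell a)))
    (hint : ∫ y, maxAffine a y ∂ν ≤ ∫ y, maxAffine a y ∂μ) (i : ι) :
    SameAffineMoments (μ.restrict (maxCell a i)) (ν.restrict (maxCell a i)) := by
  refine .of_nonneg_on_compact hD (ae_restrict_of_ae hμ) (ae_restrict_of_ae hν) fun b hb => ?_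
  have hbμ := integrable_of_convexOn_of_ae_mem hD hμ (convexOn_affineMap b)
  have hbν := integrable_of_convexOn_of_ae_mem hD hν (convexOn_affineMap b)
  have maxCell_eq (j : ι) : maxCell a j = {y | a j y = maxAffine a y} :=
    Set.ext fun _ => mem_maxCell_iff_eq_maxAffine
  have cell_le (j : ι) : ∫ y in maxCell a j, b y ∂μ ≤ ∫ y in maxCell a j, b y ∂ν := by
    rw [maxCell_eq j]
    exact h.setIntegral_le_of_integral_le hD hμ hν (convexOn_maxAffine a)
      (convexOn_affineMap (a j)) (convexOn_affineMap b) (fun y _ => le_maxAffine a j y) hb hint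
  have sum_ge : ∑ j, ∫ y in maxCell a j, b y ∂ν ≤ ∑ j, ∫ y in maxCell a j, b y ∂μ := calc
    _ = ∫ y, b y ∂ν := (integral_eq_sum_setIntegral_of_iUnion_eq_univ (iUnion_maxCell a)
      (fun j => (isClosed_maxCell a j).measurableSet) hdisj hbν).symm
    _ = ∫ y, b y ∂μ := (h.sameAffineMoments hD hμ hν b).symm
    _ ≤ _ := integral_le_sum_setIntegral_of_iUnion_eq_univ (iUnion_maxCell a) hbμ (hμ.mono hb)
  exact (Finset.sum_eq_sum_iff_of_le fun j _ => cell_le j).1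
    (le_antisymm (Finset.sum_le_sum fun j _ => cell_le j) sum_ge) i (Finset.mem_univ i)

end ConvexOrder

section Exposed

variable {d : ℕ} {D : Set (Euc d)} {ν ρ : Measure (Euc d)} [IsProbabilityMeasure ν]

lemma isLipschitzExposed_of_convexOn (hD : IsCompact D) (hν : ∀ᵐ y ∂ν, y ∈ D)
    (hρ : ρ ∈ fusions D ν) {p : Euc d → ℝ} (hp : ConvexOn ℝ univ p)
    (hint : ∫ y, p y ∂ν ≤ ∫ y, p y ∂ρ) {S : Set (Euc d)} (hS : IsClosed S)
    (hρS : ∀ᵐ y ∂ρ, y ∈ S)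
    (huniq : ∀ lam ∈ fusions D ν, (∀ᵐ y ∂lam, y ∈ S) → ∫ y, p y ∂ν ≤ ∫ y, p y ∂lam → lam = ρ) :
    IsLipschitzExposed D ν ρ := by
  have := hρ.1
  obtain ⟨K, hK⟩ :=
    hp.locallyLipschitz.locallyLipschitzOn.exists_lipschitzOnWith_of_compact hD
  have hδ : LipschitzWith 1 (Metric.infDist · S) := Metric.lipschitz_infDist_pt S
  refine ⟨hρ, K + 1, fun y => p y - Metric.infDist y S, hK.sub hδ.lipschitzOnWith, ?_⟩
  intro lam hlam hne
  have := hlam.1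
  have hδρ : ∫ y, Metric.infDist y S ∂ρ = 0 :=
    integral_eq_zero_of_ae (hρS.mono fun y hy => Metric.infDist_zero_of_mem hy)
  have hδlam : 0 ≤ ∫ y, Metric.infDist y S ∂lam :=
    integral_nonneg fun _ => Metric.infDist_nonneg
  have hplam := integrable_of_convexOn_of_ae_mem hD hlam.2.1 hp
  have hδi := integrable_of_continuous_of_ae_mem hD hlam.2.1 hδ.continuous
  have hple := hlam.2.2 p hp (integrable_of_convexOn_of_ae_mem hD hν hp) hplam
  rw [integral_sub hplam hδi, integral_sub (integrable_of_convexOn_of_ae_mem hD hρ.2.1 hp)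
    (integrable_of_continuous_of_ae_mem hD hρ.2.1 hδ.continuous), hδρ]
  by_contra! hcon
  refine hne (huniq lam hlam ?_ (by linarith))
  have hδ0 : ∫ y, Metric.infDist y S ∂lam = 0 := by linarith
  filter_upwards [(integral_eq_zero_iff_of_nonneg (fun _ => Metric.infDist_nonneg) hδi).1 hδ0]
    with y hy
  exact (hS.mem_iff_infDist_zero hρS.exists).2 hy

lemma isLipschitzExposed_of_maxCell {ι : Type*} [Finite ι] [Nonempty ι] (hD : IsCompact D)
    (hν : ∀ᵐ y ∂ν, y ∈ D) (hρ : ρ ∈ fusions D ν) {a : ι → Euc d →ᵃ[ℝ] ℝ}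
    (hdisj : Pairwise (Function.onFun (AEDisjoint ν) (maxCell a)))
    (hle : ∀ i, ConvexOrderLE (ρ.restrict (maxCell a i)) (ν.restrict (maxCell a i)))
    (hind : ∀ i, AffineIndependent ℝ
      ((↑) : (ρ.restrict (maxCell a i)).support → Euc d)) :
    IsLipschitzExposed D ν ρ := by
  have := Fintype.ofFinite ι
  have := hρ.1
  let T : ι → Set (Euc d) := fun i => (ρ.restrict (maxCell a i)).support
  have finite_T (i : ι) : (T i).Finite := finite_set_of_fin_dim_affineIndependent ℝ (hind i)
  have mem_T {i : ι} {y : Euc d} : y ∈ T i ↔ y ∈ maxCell a i ∧ ρ {y} ≠ 0 :=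
    mem_support_restrict_iff_of_finite (finite_T i)
  have same_ρ (i : ι) := (hle i).sameAffineMoments hD (ae_restrict_of_ae hρ.2.1)
    (ae_restrict_of_ae hν)
  refine isLipschitzExposed_of_convexOn hD hν hρ (convexOn_maxAffine a)
    (integral_maxAffine_le_of_sameAffineMoments hD hρ.2.1 hν hdisj same_ρ)
    (isClosed_iUnion_of_finite fun i => (finite_T i).isClosed) ?_ ?_
  · rw [← ρ.restrict_univ, ← iUnion_maxCell a, ae_restrict_iUnion_iff]
    exact fun i => mem_of_superset Measure.support_mem_ae (subset_iUnion T i)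
  · intro lam hlam hlamT hint
    have := hlam.1
    have same_lam := hlam.2.2.sameAffineMoments_restrict_maxCell hD hlam.2.1 hν hdisj hint
    have lam_mem_T (i : ι) : ∀ᵐ y ∂lam.restrict (maxCell a i), y ∈ T i := by
      filter_upwards [ae_restrict_of_ae hlamT,
        ae_restrict_mem (isClosed_maxCell a i).measurableSet] with y hyT hyi
      obtain ⟨j, hj⟩ := mem_iUnion.1 hyT
      exact mem_T.2 ⟨hyi, (mem_T.1 hj).2⟩
    rw [← lam.restrict_univ, ← ρ.restrict_univ, ← iUnion_maxCell a,
      Measure.restrict_iUnion_congr]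
    exact fun i => ((same_lam i).trans (same_ρ i).symm).eq_of_affineIndependent (hind i)
      (finite_T i).countable (lam_mem_T i) Measure.support_mem_ae

end Exposed

section Laguerre

variable {E : Type*} [NormedAddCommGroup E] [InnerProductSpace ℝ E]

/-- The affine function `y ↦ ‖y‖² - (‖y - x‖² - w)`: up to the common term `‖y‖²`, the negative of
the power distance to the site `x` of weight `w`. -/
def powerAffine (x : E) (w : ℝ) : E →ᵃ[ℝ] ℝ :=
  ((2 : ℝ) • (innerSL ℝ x).toLinearMap).toAffineMap + AffineMap.const ℝ E (w - ‖x‖ ^ 2)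

lemma powerAffine_apply (x : E) (w : ℝ) (y : E) :
    powerAffine x w y = ‖y‖ ^ 2 - (‖y - x‖ ^ 2 - w) := by
  rw [norm_sub_sq_real, real_inner_comm]
  simp only [powerAffine, AffineMap.coe_add, LinearMap.coe_toAffineMap, Pi.add_apply,
    LinearMap.smul_apply, ContinuousLinearMap.coe_coe, innerSL_apply_apply, smul_eq_mul,
    AffineMap.coe_const, Function.const_apply]
  ring

lemma eq_of_powerAffine_eq {x x' : E} {w w' : ℝ} (h : powerAffine x w = powerAffine x' w') :
    x = x' := by
  have hlin : (2 : ℝ) • (innerSL ℝ x).toLinearMap = (2 : ℝ) • (innerSL ℝ x').toLinearMap := by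
    simpa only [powerAffine, AffineMap.add_linear, AffineMap.const_linear, add_zero,
      LinearMap.toAffineMap_linear] using congrArg AffineMap.linear h
  exact ext_inner_right ℝ (LinearMap.congr_fun (smul_right_injective _ two_ne_zero hlin))

lemma LaguerreCell_eq_inter_maxCell {d n : ℕ} (D : Set (Euc d)) (X : Fin n → Euc d)
    (g : Fin n → ℝ) (i : Fin n) :
    LaguerreCell D X g i = D ∩ maxCell (fun j => powerAffine (X j) (g j)) i := by
  ext y
  simp only [LaguerreCell, maxCell, powerAffine_apply, sub_le_sub_iff_left, mem_inter_iff,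
    mem_ofPred_eq]

lemma LaguerreCell_ae_eq_maxCell {d n : ℕ} {D : Set (Euc d)} {μ : Measure (Euc d)}
    (hμ : ∀ᵐ y ∂μ, y ∈ D) (X : Fin n → Euc d) (g : Fin n → ℝ) (i : Fin n) :
    LaguerreCell D X g i =ᵐ[μ] maxCell (fun j => powerAffine (X j) (g j)) i := by
  rw [LaguerreCell_eq_inter_maxCell]
  exact inter_ae_eq_right_of_ae_eq_univ (eventuallyEq_univ.2 hμ)

end Laguerre

theorem lipschitz_exposed_of_laguerre_affineIndependent_general
    {d : ℕ} (D : Set (Euc d)) (hD : IsCompact D)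
    (ν : Measure (Euc d)) [IsProbabilityMeasure ν] (hfull : msupport ν = D)
    (hν : ∀ H : AffineSubspace ℝ (Euc d), H ≠ ⊤ → ν H = 0)
    (ρ : Measure (Euc d)) (hρ : ρ ∈ fusions D ν)
    (hLag : ∃ (n : ℕ) (X : Fin n → Euc d) (g : Fin n → ℝ), 0 < n ∧ Function.Injective X ∧
      ∀ i, 0 < ν (LaguerreCell D X g i) →
        ConvexOrderLE (ρ.restrict (LaguerreCell D X g i))
          (ν.restrict (LaguerreCell D X g i)) ∧
        AffineIndependent ℝ
          (fun x : msupport (ρ.restrict (LaguerreCell D X g i)) => (x : Euc d))) :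
    IsLipschitzExposed D ν ρ := by
  obtain ⟨n, X, g, hn, hX, hcell⟩ := hLag
  have : Nonempty (Fin n) := Fin.pos_iff_nonempty.1 hn
  rw [msupport_eq_support] at hfull
  have hνD : ∀ᵐ y ∂ν, y ∈ D := hfull ▸ Measure.support_mem_ae
  let a : Fin n → Euc d →ᵃ[ℝ] ℝ := fun i => powerAffine (X i) (g i)
  have ha : Function.Injective a := fun i j h => hX (eq_of_powerAffine_eq h)
  let e : {i // 0 < ν (maxCell a i)} → Fin n := Subtype.val
  have hcover : D ⊆ ⋃ k, maxCell a (e k) :=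
    hfull ▸ support_subset_iUnion_of_measure_pos (iUnion_maxCell a) (isClosed_maxCell a)
  have : Nonempty {i // 0 < ν (maxCell a i)} :=
    hνD.exists.elim fun y hy => (mem_iUnion.1 (hcover hy)).nonempty
  have restrict_eq {ξ : Measure (Euc d)} (hξ : ∀ᵐ y ∂ξ, y ∈ D) (k) :
      ξ.restrict (LaguerreCell D X g (e k)) = ξ.restrict (maxCell (a ∘ e) k) :=
    Measure.restrict_congr_set <| (LaguerreCell_ae_eq_maxCell hξ X g (e k)).trans
      (maxCell_comp_ae_eq (hξ.mono hcover) k).symm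
  have pos (k) : 0 < ν (LaguerreCell D X g (e k)) :=
    k.2.trans_eq (measure_congr (LaguerreCell_ae_eq_maxCell hνD X g (e k))).symm
  exact isLipschitzExposed_of_maxCell hD hνD hρ
    (pairwise_aedisjoint_maxCell hν (ha.comp Subtype.val_injective))
    (fun k => restrict_eq hρ.2.1 k ▸ restrict_eq hνD k ▸ (hcell (e k) (pos k)).1)
    fun k => restrict_eq hρ.2.1 k ▸ msupport_eq_support (ρ.restrict _) ▸ (hcell (e k) (pos k)).2

/-- if `ρ ∈ F_ν` has finite support and there is a Laguerre diagram of `D`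
such that for each cell `L` with `ν(L) > 0` one has `ρ|_L ⪯ ν|_L` and the support of `ρ|_L` is
affinely independent, then `ρ` is a Lipschitz-exposed point of `F_ν`. -/
theorem lipschitz_exposed_of_laguerre_affineIndependent
    {d : ℕ} (D : Set (Euc d)) (hD : IsCompact D) (hDconv : Convex ℝ D)
    (ν : Measure (Euc d)) [IsProbabilityMeasure ν] (hνD : ν Dᶜ = 0)
    (hfull : msupport ν = D)
    (hac : ν ≪ (volume : Measure (Euc d)))
    (ρ : Measure (Euc d)) (hρ : ρ ∈ fusions D ν)
    (hfin : (msupport ρ).Finite)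
    (hLag : ∃ (n : ℕ) (X : Fin n → Euc d) (g : Fin n → ℝ), 0 < n ∧ Function.Injective X ∧
      ∀ i, 0 < ν (LaguerreCell D X g i) →
        ConvexOrderLE (ρ.restrict (LaguerreCell D X g i))
          (ν.restrict (LaguerreCell D X g i)) ∧
        AffineIndependent ℝ
          (fun x : msupport (ρ.restrict (LaguerreCell D X g i)) => (x : Euc d))) :
    IsLipschitzExposed D ν ρ :=
  lipschitz_exposed_of_laguerre_affineIndependent_general D hD ν hfull
    (fun H hH => hac (Measure.addHaar_affineSubspace volume H hH)) ρ hρ hLag
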